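/- arXiv:1410.6697 — 2 statements merged into one kernel-verified Lean document; each statement's English description precedes it below -/
import Mathlib

section
/- Let k ≥ 2 be an integer, let Ψ : ℕ → (0,∞) satisfy Ψ(x) < 1/(2x) for all sufficiently large x and Ψ(l·x) ≤ l·Ψ(x) for all positive integers l, x, and let I ⊆ (−1/2, 1/2) be a non-empty open interval. Then the set (𝒦_k(Ψ) \ ⋃_{0<c<1} 𝒦_k(cΨ)) ∩ I is uncountable. -/
open Filter Set

/-- `Kk k Ψ` is the set of real `ζ` not algebraic of degree at most `k` such that
`max_{1≤j≤k} |q·ζ^j - p_j| ≤ Ψ q` holds for infinitely many tuples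
`(q, p₁, …, p_k) ∈ ℕ × ℤ^k` with `q ≥ 1`. -/
def Kk (k : ℕ) (Ψ : ℕ → ℝ) : Set ℝ :=
  {ζ : ℝ | (∀ P : Polynomial ℤ, P ≠ 0 → P.natDegree ≤ k → (Polynomial.aeval ζ) P ≠ 0) ∧
    {qp : ℕ × (Fin k → ℤ) | 1 ≤ qp.1 ∧
      ∀ j : Fin k, |(qp.1 : ℝ) * ζ ^ ((j : ℕ) + 1) - (qp.2 j : ℝ)| ≤ Ψ qp.1}.Infinite}

open scoped Topology

/-!
Let `ζ` be transcendental with `|ζ| < 1 / 2`. If `|q ζ ^ j - p_j| ≤ Ψ q` for `1 ≤ j ≤ k` and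
`r = p₁ / q` in lowest terms, then `Ψ q < 1 / (2 q)` forces `q r ^ j` to be an integer for every
`j ≤ k`, so `den r ^ k ∣ q`. By `Ψ (l x) ≤ l Ψ x` one may replace `q` by `den r ^ k`, and membership
of `ζ` in `𝒦_k(Ψ)` becomes the one-dimensional condition `|ζ - r| ≤ φ (den r)` for rationals `r` of
unbounded denominator, where `φ Q = Ψ (Q ^ k) / Q ^ k = o(Q⁻²)` because `k ≥ 2`.

For any positive `φ = o(Q⁻²)`, pass from `r` to a right Farey neighbour `s` with denominator close
to `1 / (den r * φ (den r))`. Then `s - r = 1 / (den r * den s)` is just below `φ (den r)`, so the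
intervals `[r, r + φ (den r)]` are nested and a common point `ζ` satisfies `|ζ - r| ~ φ (den r)`
along the sequence. Since distinct rationals repel, no other rational of large denominator
approximates `ζ` to order `φ`, so `φ` cannot be improved by a factor `c < 1`. At each step there
are two choices of `s` with disjoint intervals, and hence uncountably many such `ζ`.
-/

/-! ### Rational numbers -/

lemma one_le_den_mul_den_mul_of_abs_sub_le {ζ x y : ℝ} {r s : ℚ} (hrs : r ≠ s)
    (hr : |ζ - r| ≤ x) (hs : |ζ - s| ≤ y) : 1 ≤ (r.den : ℝ) * s.den * (x + y) := by
  have hnum : r.num * s.den - s.num * r.den ≠ 0 :=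
    sub_ne_zero.mpr (mt Rat.eq_iff_mul_eq_mul.mpr hrs)
  have hdiff : ((r.num * s.den - s.num * r.den : ℤ) : ℝ) = r.den * s.den * (r - s) := by
    push_cast [Rat.cast_def r, Rat.cast_def s]
    field_simp
  calc (1 : ℝ) ≤ |((r.num * s.den - s.num * r.den : ℤ) : ℝ)| := by
        exact_mod_cast Int.one_le_abs hnum
    _ = r.den * s.den * |(r : ℝ) - s| := by
        rw [hdiff, abs_mul, abs_of_nonneg (by positivity)]
    _ ≤ r.den * s.den * (x + y) := by
        gcongr
        calc |(r : ℝ) - s| ≤ |r - ζ| + |ζ - s| := abs_sub_le _ _ _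
          _ ≤ x + y := add_le_add (by rwa [abs_sub_comm]) hs

lemma exists_rat_sub_eq_one_div_den_mul_den (r : ℚ) {x : ℝ} (hx : 0 ≤ x) :
    ∃ s : ℚ, x < s.den ∧ s.den ≤ x + r.den ∧ (s - r : ℝ) = 1 / (r.den * s.den) := by
  obtain ⟨u, v, huv⟩ := Rat.isCoprime_num_den r
  obtain ⟨m, ⟨hxm, hmx⟩, -⟩ :=
    existsUnique_add_zsmul_mem_Ioc (Nat.cast_pos.mpr r.den_pos : (0 : ℝ) < r.den) (-u) x
  set n : ℤ := -u + m * r.den with hn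
  set l : ℤ := v + m * r.num with hl
  have hnr : (-u + m • (r.den : ℝ) : ℝ) = n := by push_cast [hn, zsmul_eq_mul]; rfl
  rw [hnr] at hxm hmx
  have hn0 : 0 < n := by exact_mod_cast hx.trans_lt hxm
  have hdet : l * r.den - r.num * n = 1 := by linear_combination huv
  have hcop : IsCoprime l n := ⟨r.den, -r.num, by linear_combination hdet⟩
  have hden : (((l / n : ℚ).den : ℤ) : ℝ) = n :=
    congrArg _ (Rat.den_div_eq_of_coprime hn0 (Int.isCoprime_iff_nat_coprime.mp hcop))
  rw [Int.cast_natCast] at hden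
  refine ⟨l / n, hden ▸ hxm, hden ▸ hmx, ?_⟩
  have hn0' : (n : ℝ) ≠ 0 := by exact_mod_cast hn0.ne'
  have hdet' : (l : ℝ) * r.den - r.num * n = 1 := by exact_mod_cast hdet
  rw [hden, Rat.cast_def r]
  push_cast
  field_simp
  linear_combination hdet'

/-! ### Exact approximation of a real number by rationals -/

/-- The real numbers `ζ` for which `|ζ - r| ≤ φ (den r)` has rational solutions `r` of arbitrarily
large denominator. Since each denominator admits finitely many solutions, this amounts to having
infinitely many of them. -/
def approximable (φ : ℕ → ℝ) : Set ℝ :=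
  {ζ | ∃ᶠ q : ℕ in atTop, ∃ r : ℚ, r.den = q ∧ |ζ - r| ≤ φ q}

/-- The real numbers approximable exactly to order `φ`: the function `φ` cannot be improved
by a constant factor. -/
def exactlyApproximable (φ : ℕ → ℝ) : Set ℝ :=
  approximable φ \ ⋃ c ∈ Ioo (0 : ℝ) 1, approximable (fun q => c * φ q)

/-- The points approximated by `r` from the right with error at most `φ (den r)`. -/
def approxInterval (φ : ℕ → ℝ) (r : ℚ) : Set ℝ :=
  Icc (r : ℝ) (r + φ r.den)

/-- `s` is a right Farey neighbour of `r` whose denominator exceeds `1 / (den r * φ (den r))`, the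
least value for which `s` can lie in `approxInterval φ r`, by between `den r` and `3 den r`. The
bounds on the denominator are written without division. -/
structure IsApproxSucc (φ : ℕ → ℝ) (r s : ℚ) : Prop where
  sub_eq : (s - r : ℝ) = 1 / (r.den * s.den)
  one_add_le : 1 + r.den ^ 2 * φ r.den ≤ r.den * φ r.den * s.den
  le_one_add : r.den * φ r.den * s.den ≤ 1 + 3 * (r.den ^ 2 * φ r.den)

section Construction

variable {φ : ℕ → ℝ} {r s u : ℚ} {ζ : ℝ}

lemma abs_sub_le_of_mem_approxInterval (h : ζ ∈ approxInterval φ r) : |ζ - r| ≤ φ r.den := by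
  rw [abs_of_nonneg (sub_nonneg.mpr h.1)]
  linarith [h.2]

lemma nonneg_of_mem_approxInterval (h : ζ ∈ approxInterval φ r) : 0 ≤ φ r.den :=
  (abs_nonneg _).trans (abs_sub_le_of_mem_approxInterval h)

namespace IsApproxSucc

lemma den_lt (h : IsApproxSucc φ r s) (hφ : 0 < φ r.den) : r.den < s.den := by
  have hlt : (r.den * φ r.den : ℝ) * r.den < r.den * φ r.den * s.den := by
    linarith [h.one_add_le]
  exact_mod_cast lt_of_mul_lt_mul_left hlt (by positivity)

lemma approxInterval_subset (h : IsApproxSucc φ r s) (hr : 0 < φ r.den)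
    (hs : s.den ^ 2 * φ s.den ≤ 1) : approxInterval φ s ⊆ approxInterval φ r := by
  have hsr : (s : ℝ) = r + 1 / (r.den * s.den) := by linarith [h.sub_eq]
  have hφs : s.den * φ s.den ≤ r.den * φ r.den := by
    refine le_of_mul_le_mul_right (a := (s.den : ℝ)) ?_ (by positivity)
    nlinarith [h.one_add_le, (by positivity : (0 : ℝ) < r.den ^ 2 * φ r.den)]
  have hφr : 1 / (r.den * s.den : ℝ) + φ s.den ≤ φ r.den := by
    rw [div_add' _ _ _ (by positivity), div_le_iff₀ (by positivity)]
    nlinarith [h.one_add_le, mul_le_mul_of_nonneg_left hφs (by positivity : (0 : ℝ) ≤ r.den)]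
  refine Icc_subset_Icc ?_ (by linarith)
  rw [hsr]
  exact le_add_of_nonneg_right (by positivity)

lemma one_le_mul_of_abs_sub_le (h : IsApproxSucc φ r s) (hζs : ζ ∈ approxInterval φ s) {c : ℝ}
    (hc : 0 ≤ c) (hζr : |ζ - r| ≤ c * φ r.den) : 1 ≤ c * (1 + 3 * (r.den ^ 2 * φ r.den)) := by
  have hgap : 1 / (r.den * s.den : ℝ) ≤ c * φ r.den :=
    calc 1 / (r.den * s.den : ℝ) = s - r := h.sub_eq.symm
      _ ≤ ζ - r := by gcongr; exact hζs.1
      _ ≤ c * φ r.den := (le_abs_self _).trans hζr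
  calc (1 : ℝ) ≤ c * φ r.den * (r.den * s.den) := (div_le_iff₀ (by positivity)).mp hgap
    _ = c * (r.den * φ r.den * s.den) := by ring
    _ ≤ c * (1 + 3 * (r.den ^ 2 * φ r.den)) := mul_le_mul_of_nonneg_left h.le_one_add hc

/-- A rational `u` different from both neighbours is separated from each of them. The distance
to `r` forces `den s ≤ 7/3 den u`, the distance to `s` forces `den s ≥ 3 den u`. -/
lemma eq_of_abs_sub_le (h : IsApproxSucc φ r s)
    (hζr : ζ ∈ approxInterval φ r) (hζs : ζ ∈ approxInterval φ s) (hζu : |ζ - u| ≤ φ u.den)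
    (hru : r.den ≤ u.den) (hus : u.den < s.den)
    (hr : r.den ^ 2 * φ r.den ≤ 1 / 4) (hs : s.den ^ 2 * φ s.den ≤ 1 / 4)
    (hu : u.den ^ 2 * φ u.den ≤ 1 / 4) : u = r := by
  by_contra hne
  have hne' : s ≠ u := fun hsu => hus.ne (by rw [hsu])
  have sep_r := one_le_den_mul_den_mul_of_abs_sub_le (Ne.symm hne)
    (abs_sub_le_of_mem_approxInterval hζr) hζu
  have sep_s := one_le_den_mul_den_mul_of_abs_sub_le hne'
    (abs_sub_le_of_mem_approxInterval hζs) hζu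
  have hφs := nonneg_of_mem_approxInterval hζs
  have hφu : 0 ≤ φ u.den := (abs_nonneg _).trans hζu
  have hru' : (r.den : ℝ) ≤ u.den := by exact_mod_cast hru
  have hus' : (u.den : ℝ) ≤ s.den := by exact_mod_cast hus.le
  have hupper : 3 * (s.den : ℝ) ≤ 7 * u.den := by
    have hru4 : r.den * u.den * φ u.den ≤ 1 / 4 := by
      refine le_trans ?_ hu
      rw [sq]
      gcongr
    have hrs : u.den * (r.den * φ r.den * s.den) ≤ u.den * (7 / 4) := by
      gcongr
      linarith [h.le_one_add]
    nlinarith [mul_le_mul_of_nonneg_left sep_r (by positivity : (0 : ℝ) ≤ s.den)]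
  have hlower : 3 * (u.den : ℝ) ≤ s.den := by
    have hsu4 : s.den * u.den * φ s.den ≤ 1 / 4 := by
      refine le_trans ?_ hs
      rw [sq]
      gcongr
    nlinarith [mul_le_mul_of_nonneg_left sep_s (by positivity : (0 : ℝ) ≤ u.den)]
  linarith [(Nat.cast_pos.mpr u.den_pos : (0 : ℝ) < u.den)]

end IsApproxSucc

lemma disjoint_approxInterval (hrs : r ≠ s) (hr : (s : ℝ) ≤ r)
    (hs : r.den * s.den * φ s.den < 1) : Disjoint (approxInterval φ s) (approxInterval φ r) := by
  refine Set.disjoint_left.mpr fun t hts htr => ?_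
  have hsep := one_le_den_mul_den_mul_of_abs_sub_le hrs (ζ := r) (x := 0) (y := φ s.den)
    (by simp) (abs_sub_le_of_mem_approxInterval ⟨hr, htr.1.trans hts.2⟩)
  linarith

/-- Two admissible right neighbours of `r` with different denominators have disjoint intervals,
so one of them avoids `t`. -/
lemma exists_isApproxSucc_notMem (hr : 0 < φ r.den)
    (hφ : ∀ q > r.den, (q : ℝ) ^ 2 * φ q ≤ 1) (t : ℝ) :
    ∃ s : ℚ, IsApproxSucc φ r s ∧ t ∉ approxInterval φ s := by
  have hinv : (r.den * φ r.den : ℝ) * (1 / (r.den * φ r.den)) = 1 := by field_simp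
  have isApproxSucc_of_den {s : ℚ} (hsub : (s - r : ℝ) = 1 / (r.den * s.den))
      (hle : 1 / (r.den * φ r.den) + r.den ≤ (s.den : ℝ))
      (hge : s.den ≤ 1 / (r.den * φ r.den) + 3 * (r.den : ℝ)) : IsApproxSucc φ r s := by
    have hle' := mul_le_mul_of_nonneg_left hle (by positivity : (0 : ℝ) ≤ r.den * φ r.den)
    have hge' := mul_le_mul_of_nonneg_left hge (by positivity : (0 : ℝ) ≤ r.den * φ r.den)
    exact ⟨hsub, by linarith, by linarith⟩
  obtain ⟨s₁, hs₁, hs₁', hsub₁⟩ := exists_rat_sub_eq_one_div_den_mul_den r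
    (by positivity : (0 : ℝ) ≤ 1 / (r.den * φ r.den) + r.den)
  obtain ⟨s₂, hs₂, hs₂', hsub₂⟩ := exists_rat_sub_eq_one_div_den_mul_den r
    (Nat.cast_nonneg s₁.den : (0 : ℝ) ≤ s₁.den)
  have hsucc₁ : IsApproxSucc φ r s₁ := isApproxSucc_of_den hsub₁ hs₁.le (by linarith)
  have hsucc₂ : IsApproxSucc φ r s₂ := isApproxSucc_of_den hsub₂ (by linarith) (by linarith)
  by_cases ht : t ∈ approxInterval φ s₁
  · have hle : (s₂ : ℝ) ≤ s₁ := by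
      have : 1 / (r.den * s₂.den : ℝ) ≤ 1 / (r.den * s₁.den) := by gcongr
      linarith
    have hne : s₁ ≠ s₂ := fun h => hs₂.ne (by rw [h])
    have hsmall : s₁.den * s₂.den * φ s₂.den < 1 := by
      rcases le_or_gt (φ s₂.den) 0 with hneg | hpos
      · exact (mul_nonpos_of_nonneg_of_nonpos (by positivity) hneg).trans_lt one_pos
      · calc (s₁.den * s₂.den * φ s₂.den : ℝ) < s₂.den * s₂.den * φ s₂.den := by gcongr
          _ = s₂.den ^ 2 * φ s₂.den := by ring
          _ ≤ 1 := hφ _ (hsucc₂.den_lt hr)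
    exact ⟨s₂, hsucc₂, (disjoint_approxInterval hne hle hsmall).notMem_of_mem_right ht⟩
  · exact ⟨s₁, hsucc₁, ht⟩

lemma exists_seq_isApproxSucc_notMem {N : ℕ} (hpos : ∀ q ≥ N, 0 < φ q)
    (hφ : ∀ q ≥ N, (q : ℝ) ^ 2 * φ q ≤ 1) {r₀ : ℚ} (hr₀ : N ≤ r₀.den) (t : ℕ → ℝ) :
    ∃ r : ℕ → ℚ, r 0 = r₀ ∧ (∀ n, N ≤ (r n).den) ∧
      ∀ n, IsApproxSucc φ (r n) (r (n + 1)) ∧ t n ∉ approxInterval φ (r (n + 1)) := by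
  have hstep : ∀ (n : ℕ) (r : ℚ), N ≤ r.den →
      ∃ s : ℚ, IsApproxSucc φ r s ∧ t n ∉ approxInterval φ s := fun n r hr =>
    exists_isApproxSucc_notMem (hpos _ hr) (fun q hq => hφ q (hr.trans hq.le)) (t n)
  choose! next hsucc hnotMem using hstep
  let r : ℕ → ℚ := fun n => Nat.rec r₀ next n
  have hden : ∀ n, N ≤ (r n).den := fun n => by
    induction n with
    | zero => exact hr₀
    | succ n ih => exact ih.trans ((hsucc n (r n) ih).den_lt (hpos _ ih)).le
  exact ⟨r, rfl, hden, fun n => ⟨hsucc n _ (hden n), hnotMem n _ (hden n)⟩⟩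

lemma exists_forall_mem_approxInterval {r : ℕ → ℚ} (hr : ∀ n, IsApproxSucc φ (r n) (r (n + 1)))
    (hpos : ∀ n, 0 < φ (r n).den) (hφ : ∀ n, ((r n).den : ℝ) ^ 2 * φ (r n).den ≤ 1) :
    ∃ ζ, ∀ n, ζ ∈ approxInterval φ (r n) := by
  have hanti : Antitone fun n => approxInterval φ (r n) :=
    antitone_nat_of_succ_le fun n => (hr n).approxInterval_subset (hpos n) (hφ (n + 1))
  exact ⟨_, mem_iInter.mp <| ciSup_mem_iInter_Icc_of_antitone_Icc hanti fun n =>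
    le_add_of_nonneg_right (hpos n).le⟩

lemma not_approximable_const_mul_of_isApproxSucc
    (hφ : Tendsto (fun q : ℕ => (q : ℝ) ^ 2 * φ q) atTop (𝓝 0)) {r : ℕ → ℚ}
    (hmono : StrictMono fun n => (r n).den) (hr : ∀ n, IsApproxSucc φ (r n) (r (n + 1)))
    (hζ : ∀ n, ζ ∈ approxInterval φ (r n)) {c : ℝ} (hc : c ∈ Ioo (0 : ℝ) 1) :
    ζ ∉ approximable fun q => c * φ q := by
  have hfactor : Tendsto (fun q : ℕ => c * (1 + 3 * ((q : ℝ) ^ 2 * φ q))) atTop (𝓝 c) := by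
    simpa using ((hφ.const_mul 3).const_add 1).const_mul c
  have hquarter : ∀ᶠ q : ℕ in atTop, (q : ℝ) ^ 2 * φ q ≤ 1 / 4 :=
    hφ.eventually_le_const (by norm_num)
  obtain ⟨M, hM⟩ := eventually_atTop.mp ((hfactor.eventually_lt_const hc.2).and hquarter)
  have hMden : ∀ n ≥ M, M ≤ (r n).den := fun n hn => hn.trans hmono.le_apply
  have hunbounded : ¬ BddAbove ((fun n => (r n).den) '' Ici M) := fun hbdd =>
    (Ici_infinite M).image hmono.injective.injOn hbdd.finite
  refine not_frequently.mpr (eventually_atTop.mpr ⟨(r M).den, ?_⟩)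
  rintro _ hMu ⟨u, rfl, hu⟩
  obtain ⟨n, hru, hn, hus⟩ : ∃ n, (r n).den ≤ u.den ∧ M ≤ n ∧ u.den < (r (n + 1)).den := by
    simpa using (biUnion_Ici_Ico_map_succ (fun n hn => hmono.monotone hn) hunbounded).ge hMu
  have hφu : 0 ≤ φ u.den := (mul_nonneg_iff_of_pos_left hc.1).mp ((abs_nonneg _).trans hu)
  have hur : u = r n := (hr n).eq_of_abs_sub_le (hζ n) (hζ (n + 1))
    (hu.trans (mul_le_of_le_one_left hφu hc.2.le)) hru hus (hM _ (hMden n hn)).2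
    (hM _ (hMden (n + 1) (hn.trans n.le_succ))).2 (hM _ ((hMden n hn).trans hru)).2
  subst hur
  exact ((hr n).one_le_mul_of_abs_sub_le (hζ (n + 1)) hc.1.le hu).not_gt (hM _ (hMden n hn)).1

lemma mem_exactlyApproximable_of_isApproxSucc
    (hφ : Tendsto (fun q : ℕ => (q : ℝ) ^ 2 * φ q) atTop (𝓝 0)) {r : ℕ → ℚ}
    (hmono : StrictMono fun n => (r n).den) (hr : ∀ n, IsApproxSucc φ (r n) (r (n + 1)))
    (hζ : ∀ n, ζ ∈ approxInterval φ (r n)) : ζ ∈ exactlyApproximable φ := by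
  refine ⟨frequently_atTop.mpr fun M => ⟨(r M).den, hmono.le_apply, r M, rfl,
    abs_sub_le_of_mem_approxInterval (hζ M)⟩, ?_⟩
  simp only [mem_iUnion, not_exists]
  exact fun c hc => not_approximable_const_mul_of_isApproxSucc hφ hmono hr hζ hc

lemma exists_approxInterval_subset_Ioo {N : ℕ}
    (hφ : ∀ q ≥ N, (q : ℝ) ^ 2 * φ q ≤ 1) {a b : ℝ} (hab : a < b) :
    ∃ r : ℚ, N ≤ r.den ∧ approxInterval φ r ⊆ Ioo a b := by
  obtain ⟨p, hap, hpb⟩ := exists_rat_btwn hab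
  obtain ⟨r, hr, -, hsub⟩ := exists_rat_sub_eq_one_div_den_mul_den p
    (le_max_of_le_left (Nat.cast_nonneg N) : 0 ≤ max (N : ℝ) (2 / (b - p)))
  have hN : N ≤ r.den := by exact_mod_cast (le_max_left _ _).trans hr.le
  have hq : (1 : ℝ) ≤ r.den := by exact_mod_cast r.den_pos
  have hp : (1 : ℝ) ≤ p.den := by exact_mod_cast p.den_pos
  have hgap : 1 / (p.den * r.den : ℝ) ≤ 1 / r.den :=
    one_div_le_one_div_of_le (by positivity) (le_mul_of_one_le_left (by positivity) hp)
  have hlen : φ r.den ≤ 1 / r.den := by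
    refine (le_div_iff₀' (by positivity : (0 : ℝ) < r.den ^ 2)).mpr (hφ _ hN) |>.trans ?_
    exact one_div_le_one_div_of_le (by positivity) (le_self_pow₀ hq two_ne_zero)
  have hlarge : 1 / (r.den : ℝ) + 1 / r.den < b - p := by
    have hlt : 2 / (r.den : ℝ) < b - p :=
      (div_lt_comm₀ (sub_pos.mpr hpb) (by positivity)).mp ((le_max_right _ _).trans_lt hr)
    rwa [← add_div, one_add_one_eq_two]
  have hgap0 : 0 < 1 / (p.den * r.den : ℝ) := by positivity
  exact ⟨r, hN, Icc_subset_Ioo (by linarith) (by linarith)⟩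

/-- Diagonal argument: the construction avoids any prescribed sequence of reals. -/
theorem not_countable_exactlyApproximable_inter_Ioo (hpos : ∀ᶠ q in atTop, 0 < φ q)
    (hφ : Tendsto (fun q : ℕ => (q : ℝ) ^ 2 * φ q) atTop (𝓝 0)) {a b : ℝ} (hab : a < b) :
    ¬ (exactlyApproximable φ ∩ Ioo a b).Countable := by
  intro hcount
  obtain ⟨t, ht⟩ := countable_iff_exists_subset_range.mp hcount
  obtain ⟨N, hN⟩ := eventually_atTop.mp (hpos.and (hφ.eventually_le_const zero_lt_one))
  obtain ⟨r₀, hr₀, hab₀⟩ := exists_approxInterval_subset_Ioo (fun q hq => (hN q hq).2) hab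
  obtain ⟨r, rfl, hden, hr⟩ := exists_seq_isApproxSucc_notMem
    (fun q hq => (hN q hq).1) (fun q hq => (hN q hq).2) hr₀ t
  obtain ⟨ζ, hζ⟩ := exists_forall_mem_approxInterval (fun n => (hr n).1)
    (fun n => (hN _ (hden n)).1) (fun n => (hN _ (hden n)).2)
  have hmono : StrictMono fun n => (r n).den :=
    strictMono_nat_of_lt_succ fun n => (hr n).1.den_lt (hN _ (hden n)).1
  obtain ⟨n, rfl⟩ := ht
    ⟨mem_exactlyApproximable_of_isApproxSucc hφ hmono (fun n => (hr n).1) hζ, hab₀ (hζ 0)⟩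
  exact (hr n).2 (hζ (n + 1))

end Construction

/-! ### Simultaneous approximation of successive powers -/

lemma infinite_setOf_iff_frequently {α : Type*} {R : ℕ → α → Prop}
    (hR : ∀ n, {x | R n x}.Finite) :
    {z : ℕ × α | R z.1 z.2}.Infinite ↔ ∃ᶠ n in atTop, ∃ x, R n x := by
  have himage : {n | ∃ x, R n x} = Prod.fst '' {z : ℕ × α | R z.1 z.2} := by
    ext n
    simp
  rw [Nat.frequently_atTop_iff_infinite, himage]
  refine not_congr ⟨fun h => h.image _, fun h => ?_⟩
  refine (Set.Finite.biUnion h fun n _ => (hR n).image (Prod.mk n)).subset fun z hz => ?_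
  exact mem_biUnion (mem_image_of_mem _ hz) ⟨z.2, hz, rfl⟩

lemma finite_setOf_abs_sub_intCast_le (x e : ℝ) : {n : ℤ | |x - n| ≤ e}.Finite :=
  (finite_Icc ⌈x - e⌉ ⌊x + e⌋).subset fun n (hn : |x - n| ≤ e) => by
    rw [abs_le] at hn
    exact ⟨Int.ceil_le.mpr (by linarith), Int.le_floor.mpr (by linarith)⟩

/-- The real numbers `ζ` for which `q ζ, …, q ζ ^ k` all lie within `Ψ q` of an integer, for
arbitrarily large `q`. -/
def powersApproximable (k : ℕ) (Ψ : ℕ → ℝ) : Set ℝ :=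
  {ζ | ∃ᶠ q : ℕ in atTop, ∃ p : Fin k → ℤ, ∀ j : Fin k, |q * ζ ^ (j + 1 : ℕ) - p j| ≤ Ψ q}

lemma mem_Kk_iff {k : ℕ} {Ψ : ℕ → ℝ} {ζ : ℝ} :
    ζ ∈ Kk k Ψ ↔
      (∀ P : Polynomial ℤ, P ≠ 0 → P.natDegree ≤ k → Polynomial.aeval ζ P ≠ 0) ∧
        ζ ∈ powersApproximable k Ψ := by
  have hfin (q : ℕ) :
      {p : Fin k → ℤ | 1 ≤ q ∧ ∀ j : Fin k, |q * ζ ^ (j + 1 : ℕ) - p j| ≤ Ψ q}.Finite :=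
    (Set.Finite.pi' fun j : Fin k =>
      finite_setOf_abs_sub_intCast_le (q * ζ ^ (j + 1 : ℕ)) (Ψ q)).subset fun _ hp => hp.2
  refine and_congr_right fun _ => (infinite_setOf_iff_frequently hfin).trans ?_
  refine frequently_congr ((eventually_ge_atTop 1).mono fun q hq => ?_)
  simp only [hq, true_and]

/-- The function `φ` for which a rational `r` with `|ζ - r| ≤ φ (den r)` makes `q = den r ^ k` a
solution of `|q ζ ^ j - q r ^ j| ≤ Ψ q`. -/
noncomputable def powRescale (k : ℕ) (Ψ : ℕ → ℝ) (q : ℕ) : ℝ :=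
  Ψ (q ^ k) / q ^ k

lemma powRescale_const_mul (k : ℕ) (Ψ : ℕ → ℝ) (c : ℝ) :
    powRescale k (fun q => c * Ψ q) = fun q => c * powRescale k Ψ q :=
  funext fun _ => mul_div_assoc _ _ _

lemma abs_pow_succ_sub_pow_succ_le {x y : ℝ} (hx : |x| ≤ 1 / 2) (hy : |y| ≤ 1 / 2) (j : ℕ) :
    |x ^ (j + 1) - y ^ (j + 1)| ≤ |x - y| := by
  have hj : ((j + 1 : ℕ) : ℝ) ≤ 2 ^ j := by exact_mod_cast Nat.succ_le_of_lt j.lt_two_pow_self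
  calc |x ^ (j + 1) - y ^ (j + 1)|
      ≤ |x - y| * (j + 1 : ℕ) * max |x| |y| ^ j := abs_pow_sub_pow_le ..
    _ ≤ |x - y| * 2 ^ j * (1 / 2) ^ j := by gcongr; exact max_le hx hy
    _ = |x - y| := by rw [mul_assoc, ← mul_pow]; norm_num

lemma lt_one_div_two_mul_sq_of_mul_le {x y e : ℝ} (hx : 0 < x) (hy : x * y ≤ e)
    (he : e < 1 / (2 * x)) : y < 1 / (2 * x ^ 2) := by
  have := (lt_div_iff₀' hx).mpr (hy.trans_lt he)
  rwa [div_div, mul_assoc, ← sq] at this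

lemma tendsto_one_div_two_mul_sq_atTop_nhds_zero_nat :
    Tendsto (fun x : ℕ => 1 / (2 * (x : ℝ) ^ 2)) atTop (𝓝 0) :=
  tendsto_const_nhds.div_atTop
    (((tendsto_pow_atTop two_ne_zero).comp tendsto_natCast_atTop_atTop).const_mul_atTop two_pos)

lemma eventually_add_one_div_two_mul_sq_le {y z : ℝ} (h : y < z) :
    ∀ᶠ x : ℕ in atTop, y + 1 / (2 * (x : ℝ) ^ 2) ≤ z :=
  (tendsto_one_div_two_mul_sq_atTop_nhds_zero_nat.const_add y).eventually_le_const
    (by rwa [add_zero])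

lemma den_pow_dvd_of_abs_sub_lt {r : ℚ} {k q : ℕ}
    (h : ∀ j < k, ∃ p : ℤ, |(q : ℝ) * r ^ (j + 1) - p| < 1 / r.den) : r.den ^ k ∣ q := by
  induction k with
  | zero => simp
  | succ j ih =>
    obtain ⟨m, rfl⟩ := ih fun i hi => h i (hi.trans j.lt_succ_self)
    obtain ⟨p, hp⟩ := h j j.lt_succ_self
    have hclear : ((m * r.num ^ (j + 1) - r.den * p : ℤ) : ℝ) =
        r.den * (((r.den ^ j * m : ℕ) : ℝ) * r ^ (j + 1) - p) := by
      rw [Rat.cast_def r, div_pow]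
      push_cast
      field_simp
      ring
    have hlt : |((m * r.num ^ (j + 1) - r.den * p : ℤ) : ℝ)| < 1 := by
      rw [hclear, abs_mul, Nat.abs_cast]
      exact (lt_div_iff₀' (by positivity)).mp hp
    have hzero : m * r.num ^ (j + 1) - r.den * p = 0 :=
      Int.abs_lt_one_iff.mp (by exact_mod_cast hlt)
    have hdvd : (r.den : ℤ) ∣ m * r.num ^ (j + 1) := ⟨p, sub_eq_zero.mp hzero⟩
    rw [pow_succ]
    exact mul_dvd_mul_left _ <| Int.natCast_dvd_natCast.mp <|
      (Rat.isCoprime_num_den r).symm.pow_right.dvd_of_dvd_mul_right hdvd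

section Powers

variable {k : ℕ} {Ψ : ℕ → ℝ} {ζ : ℝ}

lemma tendsto_sq_mul_powRescale (hk : 2 ≤ k) (hpos : ∀ q, 0 ≤ Ψ q)
    (hΨ : ∀ᶠ x : ℕ in atTop, Ψ x < 1 / (2 * x)) :
    Tendsto (fun q : ℕ => (q : ℝ) ^ 2 * powRescale k Ψ q) atTop (𝓝 0) := by
  have hpow : Tendsto (fun q : ℕ => q ^ k) atTop atTop := tendsto_pow_atTop (by lia)
  refine squeeze_zero' (.of_forall fun q => ?_) ?_ tendsto_one_div_atTop_nhds_zero_nat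
  · have := hpos (q ^ k)
    unfold powRescale
    positivity
  filter_upwards [hpow.eventually hΨ, eventually_ge_atTop 1] with q hq hq1
  have hq1' : (1 : ℝ) ≤ q := by exact_mod_cast hq1
  have hsq : (q : ℝ) ^ 2 ≤ q ^ k := pow_le_pow_right₀ hq1' hk
  have hself : (q : ℝ) ≤ q ^ k := le_self_pow₀ hq1' (by lia)
  push_cast at hq
  calc (q : ℝ) ^ 2 * (Ψ (q ^ k) / q ^ k) ≤ q ^ k * (Ψ (q ^ k) / q ^ k) := by
        have := hpos (q ^ k)
        gcongr
    _ = Ψ (q ^ k) := mul_div_cancel₀ _ (by positivity)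
    _ ≤ 1 / (2 * q ^ k) := hq.le
    _ ≤ 1 / q := one_div_le_one_div_of_le (by positivity) (by linarith)

lemma exists_den_pow_dvd_of_abs_mul_pow_sub_le (hk : 0 < k) {x : ℕ} (hx : 0 < x) {e : ℝ}
    (he : e < 1 / (2 * x)) (hζ : |ζ| + 1 / (2 * x ^ 2) ≤ 1 / 2) {p : Fin k → ℤ}
    (hp : ∀ j : Fin k, |x * ζ ^ (j + 1 : ℕ) - p j| ≤ e) :
    ∃ r : ℚ, r.den ^ k ∣ x ∧ x * |ζ - r| ≤ e := by
  set r : ℚ := p ⟨0, hk⟩ / x with hr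
  have hζr : x * |ζ - r| ≤ e := by
    have hxr : (x * ζ ^ (0 + 1) - p ⟨0, hk⟩ : ℝ) = x * (ζ - r) := by
      rw [hr]
      push_cast
      field_simp
    rw [← Nat.abs_cast x, ← abs_mul, ← hxr]
    exact hp ⟨0, hk⟩
  have hr_half : |(r : ℝ)| ≤ 1 / 2 := by
    have hdist := lt_one_div_two_mul_sq_of_mul_le (by positivity) hζr he
    linarith [abs_sub_abs_le_abs_sub (r : ℝ) ζ, abs_sub_comm (r : ℝ) ζ]
  have hden : (r.den : ℝ) ≤ x := by
    have hdvd : (r.den : ℤ) ∣ x := by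
      have := Rat.den_dvd (p ⟨0, hk⟩) x
      rwa [Rat.divInt_eq_div, Int.cast_natCast] at this
    exact_mod_cast Nat.le_of_dvd hx (Int.natCast_dvd_natCast.mp hdvd)
  have hζ_half : |ζ| ≤ 1 / 2 := by
    linarith [(by positivity : 0 ≤ 1 / (2 * (x : ℝ) ^ 2))]
  refine ⟨r, den_pow_dvd_of_abs_sub_lt fun j hj => ⟨p ⟨j, hj⟩, ?_⟩, hζr⟩
  have hpow : |(x : ℝ) * r ^ (j + 1) - x * ζ ^ (j + 1)| ≤ e := by
    rw [← mul_sub, abs_mul, Nat.abs_cast, abs_sub_comm]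
    exact (mul_le_mul_of_nonneg_left (abs_pow_succ_sub_pow_succ_le hζ_half hr_half j)
      (Nat.cast_nonneg x)).trans hζr
  calc |(x : ℝ) * r ^ (j + 1) - p ⟨j, hj⟩|
      ≤ |(x : ℝ) * r ^ (j + 1) - x * ζ ^ (j + 1)| + |x * ζ ^ (j + 1) - p ⟨j, hj⟩| :=
        abs_sub_le _ _ _
    _ ≤ e + e := add_le_add hpow (hp ⟨j, hj⟩)
    _ < 1 / (2 * x) + 1 / (2 * x) := add_lt_add he he
    _ = 1 / x := by field_simp; norm_num
    _ ≤ 1 / r.den := one_div_le_one_div_of_le (by positivity) hden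

lemma abs_sub_le_powRescale_of_den_pow_dvd
    (hmul : ∀ l x : ℕ, 1 ≤ l → 1 ≤ x → Ψ (l * x) ≤ l * Ψ x) {x : ℕ} (hx : 0 < x) {r : ℚ}
    (hdvd : r.den ^ k ∣ x) (hr : x * |ζ - r| ≤ Ψ x) : |ζ - r| ≤ powRescale k Ψ r.den := by
  obtain ⟨l, rfl⟩ := hdvd
  have hl : 0 < l := Nat.pos_of_mul_pos_left hx
  refine (le_div_iff₀' (by positivity)).mpr (le_of_mul_le_mul_left ?_ (Nat.cast_pos.mpr hl))
  calc (l : ℝ) * (r.den ^ k * |ζ - r|) = (r.den ^ k * l : ℕ) * |ζ - r| := by push_cast; ring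
    _ ≤ Ψ (l * r.den ^ k) := by rwa [mul_comm l]
    _ ≤ l * Ψ (r.den ^ k) := hmul _ _ hl (Nat.pow_pos r.den_pos)

lemma approximable_powRescale_of_mem_powersApproximable (hk : 0 < k) (hζ : |ζ| < 1 / 2)
    (hirr : Irrational ζ) (hΨ : ∀ᶠ x : ℕ in atTop, Ψ x < 1 / (2 * x))
    (hmul : ∀ l x : ℕ, 1 ≤ l → 1 ≤ x → Ψ (l * x) ≤ l * Ψ x)
    (h : ζ ∈ powersApproximable k Ψ) : ζ ∈ approximable (powRescale k Ψ) := by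
  refine frequently_atTop.mpr fun M => ?_
  have hfar := tendsto_one_div_two_mul_sq_atTop_nhds_zero_nat.eventually
    (hirr.eventually_forall_le_dist_cast_rat_of_den_le M)
  obtain ⟨x, ⟨p, hp⟩, hΨx, hhalfx, hfarx, hx⟩ := (h.and_eventually <|
    hΨ.and <| (eventually_add_one_div_two_mul_sq_le hζ).and <| hfar.and <|
      eventually_gt_atTop 0).exists
  obtain ⟨r, hdvd, hr⟩ := exists_den_pow_dvd_of_abs_mul_pow_sub_le hk hx hΨx hhalfx hp
  refine ⟨r.den, ?_, r, rfl, abs_sub_le_powRescale_of_den_pow_dvd hmul hx hdvd hr⟩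
  by_contra! hden
  exact (hfarx r hden.le).not_gt (lt_one_div_two_mul_sq_of_mul_le (by positivity) hr hΨx)

lemma den_pow_mul_pow_eq_intCast (r : ℚ) {j k : ℕ} (hj : j ≤ k) :
    (r.den : ℝ) ^ k * r ^ j = (r.num ^ j * r.den ^ (k - j) : ℤ) := by
  have hnum : (r.den : ℝ) * r = r.num := by exact_mod_cast r.den_mul_eq_num
  push_cast
  rw [← hnum, mul_pow, mul_right_comm, ← pow_add, Nat.add_sub_of_le hj]

lemma mem_powersApproximable_of_approximable_powRescale (hk : 0 < k) (hζ : |ζ| < 1 / 2)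
    (hΨ : ∀ᶠ x : ℕ in atTop, Ψ x < 1 / (2 * x))
    (h : ζ ∈ approximable (powRescale k Ψ)) : ζ ∈ powersApproximable k Ψ := by
  have hpow : Tendsto (fun q : ℕ => q ^ k) atTop atTop := tendsto_pow_atTop hk.ne'
  refine hpow.frequently ((h.and_eventually <| hpow.eventually <|
    hΨ.and (eventually_add_one_div_two_mul_sq_le hζ)).mono ?_)
  rintro _ ⟨⟨r, rfl, hr⟩, hΨr, hhalfr⟩
  have hmulr : (r.den : ℝ) ^ k * |ζ - r| ≤ Ψ (r.den ^ k) := (le_div_iff₀' (by positivity)).mp hr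
  have hr_half : |(r : ℝ)| ≤ 1 / 2 := by
    push_cast at hΨr hhalfr
    have hdist := lt_one_div_two_mul_sq_of_mul_le (by positivity) hmulr hΨr
    linarith [abs_sub_abs_le_abs_sub (r : ℝ) ζ, abs_sub_comm (r : ℝ) ζ]
  refine ⟨fun j => r.num ^ (j + 1 : ℕ) * r.den ^ (k - (j + 1)), fun j => ?_⟩
  rw [← den_pow_mul_pow_eq_intCast r j.is_lt, Nat.cast_pow, ← mul_sub, abs_mul,
    abs_of_nonneg (by positivity)]
  exact (mul_le_mul_of_nonneg_left (abs_pow_succ_sub_pow_succ_le hζ.le hr_half j)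
    (by positivity)).trans hmulr

lemma mem_powersApproximable_iff (hk : 0 < k) (hζ : |ζ| < 1 / 2) (hirr : Irrational ζ)
    (hΨ : ∀ᶠ x : ℕ in atTop, Ψ x < 1 / (2 * x))
    (hmul : ∀ l x : ℕ, 1 ≤ l → 1 ≤ x → Ψ (l * x) ≤ l * Ψ x) :
    ζ ∈ powersApproximable k Ψ ↔ ζ ∈ approximable (powRescale k Ψ) :=
  ⟨approximable_powRescale_of_mem_powersApproximable hk hζ hirr hΨ hmul,
    mem_powersApproximable_of_approximable_powRescale hk hζ hΨ⟩

lemma mem_Kk_iff_mem_approximable (hk : 0 < k) (hζ : |ζ| < 1 / 2) (htr : Transcendental ℤ ζ)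
    (hΨ : ∀ᶠ x : ℕ in atTop, Ψ x < 1 / (2 * x))
    (hmul : ∀ l x : ℕ, 1 ≤ l → 1 ≤ x → Ψ (l * x) ≤ l * Ψ x) :
    ζ ∈ Kk k Ψ ↔ ζ ∈ approximable (powRescale k Ψ) := by
  have hirr : Irrational ζ :=
    Transcendental.irrational (mt (IsFractionRing.isAlgebraic_iff ℤ ℚ ℝ).mpr htr)
  rw [mem_Kk_iff, mem_powersApproximable_iff hk hζ hirr hΨ hmul]
  exact and_iff_right fun P hP _ h => htr ⟨P, hP, h⟩

lemma mem_Kk_diff_of_mem_exactlyApproximable (hk : 0 < k) (hpos : ∀ q, 0 ≤ Ψ q)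
    (hΨ : ∀ᶠ x : ℕ in atTop, Ψ x < 1 / (2 * x))
    (hmul : ∀ l x : ℕ, 1 ≤ l → 1 ≤ x → Ψ (l * x) ≤ l * Ψ x)
    (hζ : |ζ| < 1 / 2) (htr : Transcendental ℤ ζ)
    (h : ζ ∈ exactlyApproximable (powRescale k Ψ)) :
    ζ ∈ Kk k Ψ \ ⋃ c ∈ Ioo (0 : ℝ) 1, Kk k (fun x => c * Ψ x) := by
  refine ⟨(mem_Kk_iff_mem_approximable hk hζ htr hΨ hmul).mpr h.1, fun hmem => h.2 ?_⟩
  simp only [mem_iUnion] at hmem ⊢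
  obtain ⟨c, hc, hcK⟩ := hmem
  have hcΨ : ∀ᶠ x : ℕ in atTop, c * Ψ x < 1 / (2 * x) :=
    hΨ.mono fun x hx => (mul_le_of_le_one_left (hpos x) hc.2.le).trans_lt hx
  have hcmul : ∀ l x : ℕ, 1 ≤ l → 1 ≤ x → c * Ψ (l * x) ≤ l * (c * Ψ x) := fun l x hl hx => by
    rw [mul_left_comm]
    exact mul_le_mul_of_nonneg_left (hmul l x hl hx) hc.1.le
  rw [mem_Kk_iff_mem_approximable hk hζ htr hcΨ hcmul, powRescale_const_mul] at hcK
  exact ⟨c, hc, hcK⟩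

end Powers

/-- For `k ≥ 2`, `Ψ` positive with `Ψ(x) < 1/(2x)` for large `x` and `Ψ(l·x) ≤ l·Ψ(x)`,
and any non-empty open interval `(a, b) ⊆ (-1/2, 1/2)`, the set
`(𝒦_k(Ψ) \ ⋃_{0<c<1} 𝒦_k(cΨ)) ∩ (a, b)` is uncountable. -/
theorem powers_jarnik_first (k : ℕ) (hk : 2 ≤ k)
    (Ψ : ℕ → ℝ) (hpos : ∀ q, 0 < Ψ q)
    (hA3 : ∃ N : ℕ, ∀ x : ℕ, N ≤ x → Ψ x < 1 / (2 * (x : ℝ)))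
    (hB2 : ∀ l x : ℕ, 1 ≤ l → 1 ≤ x → Ψ (l * x) ≤ (l : ℝ) * Ψ x)
    (a b : ℝ) (ha : -(1 / 2) ≤ a) (hab : a < b) (hb : b ≤ 1 / 2) :
    ¬ ((Kk k Ψ \ ⋃ c ∈ Ioo (0 : ℝ) 1, Kk k (fun x => c * Ψ x)) ∩ Ioo a b).Countable := by
  intro hcount
  have hΨ : ∀ᶠ x : ℕ in atTop, Ψ x < 1 / (2 * x) := eventually_atTop.mpr hA3
  have hφ : Tendsto (fun q : ℕ => (q : ℝ) ^ 2 * powRescale k Ψ q) atTop (𝓝 0) :=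
    tendsto_sq_mul_powRescale hk (fun q => (hpos q).le) hΨ
  have hφpos : ∀ᶠ q in atTop, 0 < powRescale k Ψ q :=
    (eventually_gt_atTop 0).mono fun q hq => div_pos (hpos _) (by positivity)
  refine not_countable_exactlyApproximable_inter_Ioo hφpos hφ hab
    ((hcount.union (Algebraic.countable ℤ ℝ)).mono fun ζ ⟨hζ, hζab⟩ => ?_)
  by_cases halg : IsAlgebraic ℤ ζ
  · exact .inr halg
  · have hhalf : |ζ| < 1 / 2 := abs_lt.mpr ⟨ha.trans_lt hζab.1, hζab.2.trans_le hb⟩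
    exact .inl ⟨mem_Kk_diff_of_mem_exactlyApproximable (by lia) (fun q => (hpos q).le) hΨ hB2
      hhalf halg hζ, hζab⟩
end

section
/- Let k ≥ 1 be an integer and let Ψ : (0,∞) → (0,∞) be admissible of degree k, i.e. Ψ(x) = o(x^{−2k+1}) as x → ∞ and Ψ(x)/Ψ(y) ≥ (y/x)^{k−1} for all sufficiently large x ≤ y. For j ≥ 1 define Ψ_j(x) := Ψ(x^{1/j})·x^{(j−1)/j}, so Ψ₁ = Ψ. Then each of the functions Ψ₁, …, Ψ_k satisfies Ψ_j(x) = o(1/x) as x → ∞ and is non-increasing for sufficiently large arguments, and the sets 𝒦^j := 𝒦_j(Ψ_j) \ ⋃_{0<c<1} 𝒦_j(cΨ_j) for 1 ≤ j ≤ k all coincide within (−1/2, 1/2), i.e. (−1/2,1/2) ∩ 𝒦^j = (−1/2,1/2) ∩ 𝒦^1 for all 1 ≤ j ≤ k. -/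
open Filter Set

/-- `psiJ Ψ j x = Ψ(x^{1/j}) · x^{(j-1)/j}`. -/
noncomputable def psiJ (Ψ : ℝ → ℝ) (j : ℕ) (x : ℝ) : ℝ :=
  Ψ (x ^ ((1 : ℝ) / (j : ℝ))) * x ^ (((j : ℝ) - 1) / (j : ℝ))

/-!
If `p / q` is a good approximation to `ζ` then `p ^ i / q ^ i` is a good approximation to `ζ ^ i`,
because `x ↦ x ^ i` is 1-Lipschitz on `[-1/2, 1/2]`; with the common denominator `q ^ j` the error
becomes at most `q ^ (j - 1) * Ψ q = Ψ_j (q ^ j)`. Conversely, let `(p₁ / q, …, p_j / q)`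
approximate `(ζ, …, ζ ^ j)` with error `Ψ_j q = o(1 / q)` and put `r = p₁ / q`. Each `q * r ^ i` is
within `1 / den r` of an integer, and, inductively in `i`, such closeness forces
`(den r) ^ i ∣ q`. So `(den r) ^ j ≤ q`, and monotonicity of `Ψ_j` turns the given approximation
into `|den r * ζ - num r| ≤ Ψ (den r)`. Transcendence of bounded degree is recovered from
irrationality by Liouville's inequality. The constant `c` is absorbed into `Ψ`.
-/

open scoped Topology

section RationalApproximation

variable {K : Type*} [Field K] [LinearOrder K] [IsStrictOrderedRing K]

lemma abs_mul_sub_eq_mul_abs_sub_div {q : K} (hq : 0 < q) (x p : K) :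
    |q * x - p| = q * |x - p / q| := by
  rw [← abs_of_pos hq, ← abs_mul, abs_of_pos hq, mul_sub, mul_div_cancel₀ _ hq.ne']

lemma abs_sub_div_le_of_one_le {q x p δ : K} (hq : 1 ≤ q) (h : |q * x - p| ≤ δ) :
    |x - p / q| ≤ δ := by
  rw [abs_mul_sub_eq_mul_abs_sub_div (by positivity)] at h
  exact (le_mul_of_one_le_left (abs_nonneg _) hq).trans h

lemma abs_pow_sub_pow_le_abs_sub {x y : K} (hx : |x| ≤ 1 / 2) (hy : |y| ≤ 1 / 2) (n : ℕ) :
    |x ^ n - y ^ n| ≤ |x - y| := by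
  have hn : (n : K) * (1 / 2) ^ (n - 1) ≤ 1 := by
    rw [one_div, inv_pow, ← div_eq_mul_inv, div_le_one (by positivity)]
    exact_mod_cast Nat.le_of_pred_lt (Nat.lt_two_pow_self (n := n - 1))
  calc |x ^ n - y ^ n| ≤ |x - y| * n * max |x| |y| ^ (n - 1) := abs_pow_sub_pow_le x y n
    _ ≤ |x - y| * n * (1 / 2) ^ (n - 1) := by gcongr; exact max_le hx hy
    _ ≤ |x - y| := by
      rw [mul_assoc]
      exact mul_le_of_le_one_right (abs_nonneg _) hn

lemma abs_pow_mul_pow_sub_le {q x p : K} (hq : 0 < q) (hx : |x| ≤ 1 / 2) (hp : |p / q| ≤ 1 / 2)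
    {i k : ℕ} (hi : i ≤ k) (hk : k ≠ 0) :
    |q ^ k * x ^ i - p ^ i * q ^ (k - i)| ≤ q ^ (k - 1) * |q * x - p| := by
  have hpow : p ^ i * q ^ (k - i) = q ^ k * (p / q) ^ i := by
    rw [pow_sub₀ q hq.ne' hi, div_pow]
    ring
  calc |q ^ k * x ^ i - p ^ i * q ^ (k - i)|
      = q ^ k * |x ^ i - (p / q) ^ i| := by
        rw [hpow, ← mul_sub, abs_mul, abs_of_pos (by positivity)]
    _ ≤ q ^ k * |x - p / q| := by gcongr ?_ * ?_; exact abs_pow_sub_pow_le_abs_sub hx hp i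
    _ = q ^ (k - 1) * |q * x - p| := by
        rw [abs_mul_sub_eq_mul_abs_sub_div hq, ← mul_assoc, pow_sub_one_mul hk]

lemma exists_pos_forall_lt_den {ζ : ℝ} (hζ : Irrational ζ) (N : ℕ) :
    ∃ ε > 0, ∀ r : ℚ, |ζ - r| < ε → N < r.den := by
  obtain ⟨ε, hε, hpos⟩ := ((hζ.eventually_forall_le_dist_cast_rat_of_den_le N).filter_mono
    nhdsWithin_le_nhds |>.and (self_mem_nhdsWithin (s := Ioi (0 : ℝ)))).exists
  exact ⟨ε, hpos, fun r hr => not_le.1 fun hN => (hε r hN).not_gt hr⟩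

lemma den_pow_dvd_of_forall_exists_abs_sub_lt {r : ℚ} {q : ℤ} {k : ℕ}
    (h : ∀ i < k, ∃ p : ℤ, r.den * |q * r ^ (i + 1) - p| < 1) : (r.den : ℤ) ^ k ∣ q := by
  induction k with
  | zero => simp
  | succ k ih =>
    obtain ⟨m, rfl⟩ := ih fun i hi => h i (hi.trans k.lt_succ_self)
    obtain ⟨p, hp⟩ := h k k.lt_succ_self
    have hint : (r.den : ℚ) * (((r.den : ℤ) ^ k * m : ℤ) * r ^ (k + 1) - p) =
        ((m * r.num ^ (k + 1) - r.den * p : ℤ) : ℚ) := by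
      push_cast
      rw [← Rat.mul_den_eq_num r]
      ring
    have hlt : |m * r.num ^ (k + 1) - r.den * p| < 1 := by
      rw [← Nat.abs_cast r.den, ← abs_mul, hint] at hp
      exact_mod_cast hp
    have hdvd : (r.den : ℤ) ∣ m * r.num ^ (k + 1) :=
      ⟨p, sub_eq_zero.1 (Int.abs_lt_one_iff.1 hlt)⟩
    have hcop : IsCoprime (r.den : ℤ) (r.num ^ (k + 1)) :=
      (Rat.isCoprime_num_den r).symm.pow_right
    rw [pow_succ]
    exact mul_dvd_mul_left _ (hcop.dvd_of_dvd_mul_right hdvd)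

lemma exists_rat_den_pow_dvd_of_forall_abs_sub_le {ζ δ : ℝ} {k q : ℕ} (hk : k ≠ 0) (hq : 0 < q)
    (hζ : |ζ| + δ ≤ 1 / 2) (hδ : q * (2 * δ) < 1) {p : Fin k → ℤ}
    (h : ∀ i : Fin k, |q * ζ ^ ((i : ℕ) + 1) - p i| ≤ δ) :
    ∃ r : ℚ, r.den ^ k ∣ q ∧ q * |ζ - r| ≤ δ := by
  have hqpos : (0 : ℝ) < q := by exact_mod_cast hq
  set a : ℤ := p ⟨0, Nat.pos_of_ne_zero hk⟩
  obtain ⟨r, hr⟩ : ∃ r : ℚ, r = a / q := ⟨_, rfl⟩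
  have hrcast : (r : ℝ) = a / q := by rw [hr]; push_cast; rfl
  have ha : |q * ζ - a| ≤ δ := by simpa using h ⟨0, Nat.pos_of_ne_zero hk⟩
  have hζr : q * |ζ - r| ≤ δ := by rwa [hrcast, ← abs_mul_sub_eq_mul_abs_sub_div hqpos]
  have hζhalf : |ζ| ≤ 1 / 2 := by linarith [abs_nonneg (q * ζ - a)]
  have hrhalf : |(r : ℝ)| ≤ 1 / 2 := by
    have hdist := abs_sub_div_le_of_one_le (by exact_mod_cast hq) ha
    rw [← hrcast, abs_sub_comm] at hdist
    linarith [abs_sub_abs_le_abs_sub (r : ℝ) ζ]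
  have hden : (r.den : ℝ) ≤ q := by
    have hdvd : (r.den : ℤ) ∣ q := by
      simpa only [hr, Rat.divInt_eq_div, Int.cast_natCast] using Rat.den_dvd a q
    exact_mod_cast Nat.le_of_dvd hq (by exact_mod_cast hdvd)
  have hclose (i : Fin k) : |q * (r : ℝ) ^ ((i : ℕ) + 1) - p i| ≤ 2 * δ :=
    calc |q * (r : ℝ) ^ ((i : ℕ) + 1) - p i|
        ≤ |q * (r : ℝ) ^ ((i : ℕ) + 1) - q * ζ ^ ((i : ℕ) + 1)| +
          |q * ζ ^ ((i : ℕ) + 1) - p i| := abs_sub_le _ _ _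
      _ ≤ q * |ζ - r| + δ := by
          rw [← mul_sub, abs_mul, abs_of_pos hqpos, abs_sub_comm ζ]
          gcongr ?_ * ?_ + ?_
          · exact abs_pow_sub_pow_le_abs_sub hrhalf hζhalf _
          · exact h i
      _ ≤ 2 * δ := by linarith
  refine ⟨r, ?_, hζr⟩
  have hdvd : (r.den : ℤ) ^ k ∣ q := by
    refine den_pow_dvd_of_forall_exists_abs_sub_lt fun i hi => ⟨p ⟨i, hi⟩, ?_⟩
    have hlt : (r.den : ℝ) * |q * (r : ℝ) ^ (i + 1) - p ⟨i, hi⟩| < 1 :=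
      (mul_le_mul hden (hclose ⟨i, hi⟩) (abs_nonneg _) hqpos.le).trans_lt hδ
    exact_mod_cast hlt
  exact_mod_cast hdvd

lemma aeval_ne_zero_of_frequently_abs_sub_le {ζ : ℝ} {ψ : ℕ → ℝ} {n : ℕ} (hζ : Irrational ζ)
    (hψ : Tendsto (fun q : ℕ => (q : ℝ) ^ n * ψ q) atTop (𝓝 0))
    (hfreq : ∃ᶠ q : ℕ in atTop, ∃ p : ℤ, |q * ζ - p| ≤ ψ q)
    {P : Polynomial ℤ} (hP : P ≠ 0) (hdeg : P.natDegree ≤ n + 1) :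
    Polynomial.aeval ζ P ≠ 0 := by
  intro hroot
  obtain ⟨A, hA, hLiouville⟩ := Liouville.exists_pos_real_of_irrational_root hζ hP
    (by rwa [Polynomial.eval_map_algebraMap])
  obtain ⟨q, ⟨p, hp⟩, hsmall, hq⟩ := (hfreq.and_eventually
    ((hψ.eventually_lt_const (one_div_pos.2 hA)).and (eventually_ge_atTop 1))).exists
  have hq1 : (1 : ℝ) ≤ q := by exact_mod_cast hq
  have hlower := hLiouville p (q - 1)
  rw [Nat.cast_pred hq, sub_add_cancel] at hlower
  refine hlower.not_gt ?_
  calc (q : ℝ) ^ P.natDegree * (|ζ - p / q| * A)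
      ≤ (q : ℝ) ^ (n + 1) * (|ζ - p / q| * A) := by gcongr
    _ = (q : ℝ) ^ n * |q * ζ - p| * A := by
        rw [abs_mul_sub_eq_mul_abs_sub_div (by positivity)]
        ring
    _ ≤ (q : ℝ) ^ n * ψ q * A := by gcongr
    _ < 1 := (lt_div_iff₀ hA).1 hsmall

end RationalApproximation

section Kk

lemma finite_setOf_forall_abs_sub_le {ι : Type*} [Finite ι] (a : ι → ℝ) (b : ℝ) :
    {p : ι → ℤ | ∀ i, |a i - p i| ≤ b}.Finite := by
  classical
  have := Fintype.ofFinite ι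
  refine (finite_Icc (fun i => ⌈a i - b⌉) fun i => ⌊a i + b⌋).subset fun p hp =>
    ⟨fun i => Int.ceil_le.2 ?_, fun i => Int.le_floor.2 ?_⟩
  · linarith [(abs_le.1 (hp i)).2]
  · linarith [(abs_le.1 (hp i)).1]

lemma infinite_setOf_abs_sub_le_iff_frequently {ι : Type*} [Finite ι] (ξ : ι → ℝ) (ψ : ℕ → ℝ) :
    {qp : ℕ × (ι → ℤ) | 1 ≤ qp.1 ∧ ∀ i, |qp.1 * ξ i - qp.2 i| ≤ ψ qp.1}.Infinite ↔
      ∃ᶠ q : ℕ in atTop, ∃ p : ι → ℤ, ∀ i, |q * ξ i - p i| ≤ ψ q := by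
  have hfst : Prod.fst '' {qp : ℕ × (ι → ℤ) | 1 ≤ qp.1 ∧ ∀ i, |qp.1 * ξ i - qp.2 i| ≤ ψ qp.1} =
      {q : ℕ | 1 ≤ q ∧ ∃ p : ι → ℤ, ∀ i, |q * ξ i - p i| ≤ ψ q} := by
    ext q
    simp
  calc _ ↔ {q : ℕ | 1 ≤ q ∧ ∃ p : ι → ℤ, ∀ i, |q * ξ i - p i| ≤ ψ q}.Infinite := by
        rw [← hfst]
        refine ⟨fun h himage => h (himage.of_finite_fibers Prod.fst fun q _ => ?_), .of_image _⟩
        have hfibre := finite_setOf_forall_abs_sub_le (fun i => q * ξ i) (ψ q)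
        refine (hfibre.image (Prod.mk q)).subset ?_
        rintro ⟨_, p⟩ ⟨⟨_, hp⟩, rfl⟩
        exact ⟨p, hp, rfl⟩
    _ ↔ ∃ᶠ q : ℕ in atTop, ∃ p : ι → ℤ, ∀ i, |q * ξ i - p i| ≤ ψ q := by
        rw [← Nat.frequently_atTop_iff_infinite]
        exact frequently_congr ((eventually_ge_atTop 1).mono fun q hq => and_iff_right hq)

lemma mem_Kk_iff_s6 {k : ℕ} {ψ : ℕ → ℝ} {ζ : ℝ} :
    ζ ∈ Kk k ψ ↔
      (∀ P : Polynomial ℤ, P ≠ 0 → P.natDegree ≤ k → Polynomial.aeval ζ P ≠ 0) ∧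
      ∃ᶠ q : ℕ in atTop, ∃ p : Fin k → ℤ, ∀ i : Fin k, |q * ζ ^ ((i : ℕ) + 1) - p i| ≤ ψ q :=
  and_congr_right' (infinite_setOf_abs_sub_le_iff_frequently (fun i : Fin k => ζ ^ ((i : ℕ) + 1)) ψ)

lemma irrational_iff_forall_aeval_ne_zero {ζ : ℝ} :
    Irrational ζ ↔ ∀ P : Polynomial ℤ, P ≠ 0 → P.natDegree ≤ 1 → Polynomial.aeval ζ P ≠ 0 := by
  constructor
  · intro hζ P hP hdeg hroot
    exact (one_lt_natDegree_of_irrational_root ζ P hζ hP hroot).not_ge hdeg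
  · rintro h ⟨r, rfl⟩
    have hden : (r.den : ℤ) ≠ 0 := by exact_mod_cast r.den_nz
    refine h (Polynomial.C (r.den : ℤ) * Polynomial.X + Polynomial.C (-r.num)) ?_
      Polynomial.natDegree_linear_le ?_
    · rw [← Polynomial.leadingCoeff_ne_zero, Polynomial.leadingCoeff_linear hden]
      exact hden
    · have hr : (r.den : ℝ) * r = r.num := by exact_mod_cast Rat.den_mul_eq_num r
      simp [hr]

lemma mem_Kk_one_iff {ψ : ℕ → ℝ} {ζ : ℝ} :
    ζ ∈ Kk 1 ψ ↔ Irrational ζ ∧ ∃ᶠ q : ℕ in atTop, ∃ p : ℤ, |q * ζ - p| ≤ ψ q := by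
  rw [mem_Kk_iff_s6, irrational_iff_forall_aeval_ne_zero]
  simp [Fin.exists_fin_succ_pi]

lemma irrational_of_mem_Kk {k : ℕ} {ψ : ℕ → ℝ} {ζ : ℝ} (hk : k ≠ 0) (h : ζ ∈ Kk k ψ) :
    Irrational ζ :=
  irrational_iff_forall_aeval_ne_zero.2 fun P hP hdeg =>
    h.1 P hP (hdeg.trans (Nat.one_le_iff_ne_zero.2 hk))

end Kk

section psiJ

variable {Ψ : ℝ → ℝ} {j : ℕ}

lemma psiJ_pow (Ψ : ℝ → ℝ) (hj : j ≠ 0) {t : ℝ} (ht : 0 ≤ t) :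
    psiJ Ψ j (t ^ j) = Ψ t * t ^ (j - 1) := by
  have hexp : (j : ℝ) - 1 = ((j - 1 : ℕ) : ℝ) := (Nat.cast_pred (Nat.pos_of_ne_zero hj)).symm
  rw [psiJ, one_div, Real.pow_rpow_inv_natCast ht hj, div_eq_inv_mul, Real.rpow_mul (by positivity),
    Real.pow_rpow_inv_natCast ht hj, hexp, Real.rpow_natCast]

lemma psiJ_one (Ψ : ℝ → ℝ) (x : ℝ) : psiJ Ψ 1 x = Ψ x := by
  simp [psiJ]

lemma psiJ_const_mul (c : ℝ) (Ψ : ℝ → ℝ) (j : ℕ) (x : ℝ) :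
    psiJ (fun y => c * Ψ y) j x = c * psiJ Ψ j x :=
  mul_assoc _ _ _

lemma tendsto_mul_psiJ {l : Filter ℝ} (hj : j ≠ 0)
    (h : Tendsto (fun x : ℝ => x ^ (2 * j - 1) * Ψ x) atTop l) :
    Tendsto (fun x : ℝ => x * psiJ Ψ j x) atTop l := by
  have hroot : Tendsto (fun x : ℝ => x ^ (j : ℝ)⁻¹) atTop atTop :=
    tendsto_rpow_atTop (by positivity)
  refine (h.comp hroot).congr' ?_
  filter_upwards [eventually_ge_atTop 0] with x hx
  obtain ⟨t, ht, rfl⟩ : ∃ t : ℝ, 0 ≤ t ∧ t ^ j = x :=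
    ⟨x ^ (j : ℝ)⁻¹, by positivity, Real.rpow_inv_natCast_pow hx hj⟩
  have hexp : 2 * j - 1 = j + (j - 1) := by omega
  rw [Function.comp_apply, Real.pow_rpow_inv_natCast ht hj, psiJ_pow Ψ hj ht, hexp, pow_add]
  ring

lemma antitoneOn_psiJ {X : ℝ} (hX : 0 < X) (hj : j ≠ 0) (hpos : ∀ x, X ≤ x → 0 < Ψ x)
    (hΨ : ∀ x y, X ≤ x → x ≤ y → (y / x) ^ (j - 1) ≤ Ψ x / Ψ y) :
    AntitoneOn (psiJ Ψ j) (Ici (X ^ j)) := by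
  have exists_root {x : ℝ} (hx : X ^ j ≤ x) : ∃ t, X ≤ t ∧ t ^ j = x := by
    have hx0 : 0 ≤ x := (pow_nonneg hX.le j).trans hx
    refine ⟨x ^ (j : ℝ)⁻¹, ?_, Real.rpow_inv_natCast_pow hx0 hj⟩
    rwa [Real.le_rpow_inv_iff_of_pos hX.le hx0 (by positivity), Real.rpow_natCast]
  rintro _ hx _ hy hxy
  obtain ⟨s, hs, rfl⟩ := exists_root hx
  obtain ⟨t, ht, rfl⟩ := exists_root hy
  have hs0 : 0 < s := hX.trans_le hs
  have ht0 : 0 < t := hX.trans_le ht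
  have hst : s ≤ t := le_of_pow_le_pow_left₀ hj ht0.le hxy
  have hratio := hΨ s t hs hst
  rw [div_pow, div_le_div_iff₀ (by positivity) (hpos t ht)] at hratio
  rw [psiJ_pow Ψ hj hs0.le, psiJ_pow Ψ hj ht0.le, mul_comm (Ψ t)]
  exact hratio

end psiJ

section Transfer

variable {Ψ : ℝ → ℝ} {k : ℕ} {ζ : ℝ}

lemma frequently_forall_abs_sub_le_psiJ (hk : k ≠ 0) (hζ : |ζ| < 1 / 2)
    (hΨ : Tendsto (fun q : ℕ => Ψ q) atTop (𝓝 0))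
    (h : ∃ᶠ q : ℕ in atTop, ∃ p : ℤ, |q * ζ - p| ≤ Ψ q) :
    ∃ᶠ q : ℕ in atTop, ∃ p : Fin k → ℤ,
      ∀ i : Fin k, |q * ζ ^ ((i : ℕ) + 1) - p i| ≤ psiJ Ψ k q := by
  refine (tendsto_pow_atTop hk).frequently ((h.and_eventually
    ((hΨ.eventually_lt_const (sub_pos.2 hζ)).and (eventually_ge_atTop 1))).mono ?_)
  rintro q ⟨⟨p, hp⟩, hsmall, hq⟩
  have hq1 : (1 : ℝ) ≤ q := by exact_mod_cast hq
  have hdist := abs_sub_div_le_of_one_le hq1 hp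
  have hhalf : |(p : ℝ) / q| ≤ 1 / 2 := by
    rw [abs_sub_comm] at hdist
    linarith [abs_sub_abs_le_abs_sub ((p : ℝ) / q) ζ]
  refine ⟨fun i => p ^ ((i : ℕ) + 1) * q ^ (k - ((i : ℕ) + 1)), fun i => ?_⟩
  push_cast
  calc |(q : ℝ) ^ k * ζ ^ ((i : ℕ) + 1) - p ^ ((i : ℕ) + 1) * q ^ (k - ((i : ℕ) + 1))|
      ≤ (q : ℝ) ^ (k - 1) * |q * ζ - p| :=
        abs_pow_mul_pow_sub_le (by positivity) hζ.le hhalf i.isLt hk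
    _ ≤ (q : ℝ) ^ (k - 1) * Ψ q := by gcongr
    _ = psiJ Ψ k ((q : ℝ) ^ k) := by rw [psiJ_pow Ψ hk (by positivity), mul_comm]

lemma abs_den_mul_sub_num_le_of_mul_abs_sub_le_psiJ {X : ℝ} {q : ℕ} {r : ℚ} (hk : k ≠ 0)
    (hanti : AntitoneOn (psiJ Ψ k) (Ici X)) (hX : X ≤ r.den ^ k) (hle : r.den ^ k ≤ q)
    (hr : q * |ζ - r| ≤ psiJ Ψ k q) : |r.den * ζ - r.num| ≤ Ψ r.den := by
  have hden : (0 : ℝ) < r.den := by exact_mod_cast r.den_pos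
  have hleR : (r.den : ℝ) ^ k ≤ q := by exact_mod_cast hle
  refine le_of_mul_le_mul_left ?_ (pow_pos hden (k - 1))
  calc (r.den : ℝ) ^ (k - 1) * |r.den * ζ - r.num|
      = (r.den : ℝ) ^ k * |ζ - r| := by
        rw [abs_mul_sub_eq_mul_abs_sub_div hden, ← Rat.cast_def, ← mul_assoc, pow_sub_one_mul hk]
    _ ≤ q * |ζ - r| := by gcongr
    _ ≤ psiJ Ψ k q := hr
    _ ≤ psiJ Ψ k ((r.den : ℝ) ^ k) := hanti hX (hX.trans hleR) hleR
    _ = (r.den : ℝ) ^ (k - 1) * Ψ r.den := by rw [psiJ_pow Ψ hk hden.le, mul_comm]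

lemma frequently_abs_sub_le_of_frequently_forall_psiJ {X : ℝ} (hk : k ≠ 0) (hζ : |ζ| < 1 / 2)
    (hirr : Irrational ζ) (hψ : Tendsto (fun q : ℕ => q * psiJ Ψ k q) atTop (𝓝 0))
    (hanti : AntitoneOn (psiJ Ψ k) (Ici X))
    (h : ∃ᶠ q : ℕ in atTop, ∃ p : Fin k → ℤ,
      ∀ i : Fin k, |q * ζ ^ ((i : ℕ) + 1) - p i| ≤ psiJ Ψ k q) :
    ∃ᶠ q : ℕ in atTop, ∃ p : ℤ, |q * ζ - p| ≤ Ψ q := by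
  refine frequently_atTop.2 fun N => ?_
  obtain ⟨ε, hε, hden⟩ := exists_pos_forall_lt_den hirr (max N ⌈X⌉₊)
  have hsmall : ∀ᶠ q : ℕ in atTop, q * psiJ Ψ k q < min (min ε (1 / 2 - |ζ|)) (1 / 2) :=
    hψ.eventually_lt_const (lt_min (lt_min hε (sub_pos.2 hζ)) one_half_pos)
  obtain ⟨q, ⟨p, hp⟩, hq, hq0⟩ := (h.and_eventually (hsmall.and (eventually_gt_atTop 0))).exists
  rw [lt_min_iff, lt_min_iff] at hq
  obtain ⟨⟨hqε, hqζ⟩, hqhalf⟩ := hq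
  have hq1 : (1 : ℝ) ≤ q := by exact_mod_cast hq0
  have hψq : 0 ≤ psiJ Ψ k q := (abs_nonneg _).trans (hp ⟨0, Nat.pos_of_ne_zero hk⟩)
  have hψle : psiJ Ψ k q ≤ q * psiJ Ψ k q := le_mul_of_one_le_left hψq hq1
  obtain ⟨r, hdvd, hr⟩ :=
    exists_rat_den_pow_dvd_of_forall_abs_sub_le hk hq0 (by linarith) (by linarith) hp
  have hrε : |ζ - r| < ε := by linarith [le_mul_of_one_le_left (abs_nonneg (ζ - r)) hq1]
  obtain ⟨hN, hXden⟩ := max_lt_iff.1 (hden r hrε)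
  have hX : X ≤ (r.den : ℝ) ^ k :=
    (Nat.lt_of_ceil_lt hXden).le.trans (le_self_pow₀ (by exact_mod_cast r.den_pos) hk)
  exact ⟨r.den, hN.le, r.num, abs_den_mul_sub_num_le_of_mul_abs_sub_le_psiJ hk hanti hX
    (Nat.le_of_dvd hq0 hdvd) hr⟩

end Transfer

/-- The paper's admissible functions of degree `k`. The exponents use truncated subtraction, so
that only `1 ≤ k` corresponds to the paper. -/
structure IsAdmissible (k : ℕ) (Ψ : ℝ → ℝ) : Prop where
  pos : ∀ x : ℝ, 0 < x → 0 < Ψ x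
  tendsto_pow_mul : Tendsto (fun x : ℝ => x ^ (2 * k - 1) * Ψ x) atTop (𝓝 0)
  exists_pow_le_div : ∃ X : ℝ, 0 < X ∧ ∀ x y : ℝ, X ≤ x → x ≤ y → (y / x) ^ (k - 1) ≤ Ψ x / Ψ y

namespace IsAdmissible

variable {Ψ : ℝ → ℝ} {j k n : ℕ} {c ζ : ℝ}

lemma tendsto_pow_mul_of_le (h : IsAdmissible k Ψ) (hn : n ≤ 2 * k - 1) :
    Tendsto (fun x : ℝ => x ^ n * Ψ x) atTop (𝓝 0) := by
  refine (Asymptotics.IsBigO.of_bound' ?_).trans_tendsto h.tendsto_pow_mul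
  filter_upwards [eventually_ge_atTop 1] with x hx
  rw [norm_mul, norm_mul, norm_pow, norm_pow]
  gcongr
  exact hx.trans (le_abs_self x)

lemma of_le (h : IsAdmissible k Ψ) (hjk : j ≤ k) : IsAdmissible j Ψ where
  pos := h.pos
  tendsto_pow_mul := h.tendsto_pow_mul_of_le (by omega)
  exists_pow_le_div := by
    obtain ⟨X, hX, hratio⟩ := h.exists_pow_le_div
    refine ⟨X, hX, fun x y hx hxy => le_trans ?_ (hratio x y hx hxy)⟩
    exact pow_le_pow_right₀ ((one_le_div (hX.trans_le hx)).2 hxy) (by omega)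

lemma const_mul (h : IsAdmissible k Ψ) (hc : 0 < c) : IsAdmissible k fun x => c * Ψ x where
  pos x hx := mul_pos hc (h.pos x hx)
  tendsto_pow_mul := by
    simpa only [mul_left_comm, mul_zero] using h.tendsto_pow_mul.const_mul c
  exists_pow_le_div := by
    simpa only [mul_div_mul_left _ _ hc.ne'] using h.exists_pow_le_div

lemma exists_antitoneOn_psiJ (h : IsAdmissible k Ψ) (hk : k ≠ 0) :
    ∃ X, AntitoneOn (psiJ Ψ k) (Ici X) := by
  obtain ⟨X, hX, hratio⟩ := h.exists_pow_le_div
  exact ⟨X ^ k, antitoneOn_psiJ hX hk (fun x hx => h.pos x (hX.trans_le hx)) hratio⟩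

lemma mem_Kk_psiJ_iff (h : IsAdmissible k Ψ) (hk : k ≠ 0) (hζ : |ζ| < 1 / 2) :
    ζ ∈ Kk k (fun q : ℕ => psiJ Ψ k q) ↔ ζ ∈ Kk 1 (fun q : ℕ => Ψ q) := by
  have hlim (n : ℕ) (hn : n ≤ 2 * k - 1) :
      Tendsto (fun q : ℕ => (q : ℝ) ^ n * Ψ q) atTop (𝓝 0) :=
    (h.tendsto_pow_mul_of_le hn).comp tendsto_natCast_atTop_atTop
  rw [mem_Kk_one_iff]
  constructor
  · intro hmem
    have hirr := irrational_of_mem_Kk hk hmem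
    obtain ⟨X, hanti⟩ := h.exists_antitoneOn_psiJ hk
    have hψ := (tendsto_mul_psiJ hk h.tendsto_pow_mul).comp tendsto_natCast_atTop_atTop
    exact ⟨hirr, frequently_abs_sub_le_of_frequently_forall_psiJ hk hζ hirr hψ hanti
      (mem_Kk_iff_s6.1 hmem).2⟩
  · rintro ⟨hirr, hfreq⟩
    refine mem_Kk_iff_s6.2 ⟨fun P hP hdeg => ?_, ?_⟩
    · exact aeval_ne_zero_of_frequently_abs_sub_le hirr (hlim (k - 1) (by omega)) hfreq hP
        (by omega)
    · exact frequently_forall_abs_sub_le_psiJ hk hζ (by simpa using hlim 0 (by omega)) hfreq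

lemma Ioo_inter_Kk_psiJ (h : IsAdmissible k Ψ) (hk : k ≠ 0) (hc : 0 < c) :
    Ioo (-(1 / 2) : ℝ) (1 / 2) ∩ Kk k (fun q : ℕ => c * psiJ Ψ k q) =
      Ioo (-(1 / 2) : ℝ) (1 / 2) ∩ Kk 1 (fun q : ℕ => c * psiJ Ψ 1 q) := by
  ext ζ
  refine and_congr_right fun hζ => ?_
  simpa only [psiJ_const_mul, psiJ_one] using (h.const_mul hc).mem_Kk_psiJ_iff hk (abs_lt.2 hζ)

end IsAdmissible

/-- If `Ψ` is admissible of degree `k` (positive on `(0,∞)`, `Ψ(x) = o(x^{-2k+1})`, and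
`Ψ(x)/Ψ(y) ≥ (y/x)^{k-1}` for all large `x ≤ y`), then each `Ψ_j` (for `1 ≤ j ≤ k`)
satisfies `Ψ_j(x) = o(1/x)`, is non-increasing for large arguments, and the difference
sets `𝒦^j = 𝒦_j(Ψ_j) \ ⋃_{0<c<1} 𝒦_j(cΨ_j)` all coincide within `(-1/2, 1/2)`. -/
theorem admissible_transfer (k : ℕ) (hk : 1 ≤ k) (Ψ : ℝ → ℝ)
    (hpos : ∀ x : ℝ, 0 < x → 0 < Ψ x)
    (hdecay : Tendsto (fun x : ℝ => x ^ (2 * k - 1) * Ψ x) atTop (nhds 0))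
    (hB0 : ∃ X : ℝ, 0 < X ∧ ∀ x y : ℝ, X ≤ x → x ≤ y → (y / x) ^ (k - 1) ≤ Ψ x / Ψ y) :
    ∀ j : ℕ, 1 ≤ j → j ≤ k →
      Tendsto (fun x : ℝ => x * psiJ Ψ j x) atTop (nhds 0) ∧
      (∃ X : ℝ, ∀ x y : ℝ, X ≤ x → x ≤ y → psiJ Ψ j y ≤ psiJ Ψ j x) ∧
      Ioo (-(1 / 2) : ℝ) (1 / 2) ∩
          (Kk j (fun q : ℕ => psiJ Ψ j q) \
            ⋃ c ∈ Ioo (0 : ℝ) 1, Kk j (fun q : ℕ => c * psiJ Ψ j q)) =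
        Ioo (-(1 / 2) : ℝ) (1 / 2) ∩
          (Kk 1 (fun q : ℕ => psiJ Ψ 1 q) \
            ⋃ c ∈ Ioo (0 : ℝ) 1, Kk 1 (fun q : ℕ => c * psiJ Ψ 1 q)) := by
  intro j hj hjk
  have hj0 : j ≠ 0 := Nat.one_le_iff_ne_zero.1 hj
  have hΨ : IsAdmissible j Ψ := IsAdmissible.of_le ⟨hpos, hdecay, hB0⟩ hjk
  obtain ⟨X, hanti⟩ := hΨ.exists_antitoneOn_psiJ hj0
  refine ⟨tendsto_mul_psiJ hj0 hΨ.tendsto_pow_mul,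
    ⟨X, fun x y hx hxy => hanti hx (hx.trans hxy) hxy⟩, ?_⟩
  have hone := hΨ.Ioo_inter_Kk_psiJ hj0 one_pos
  simp only [one_mul] at hone
  rw [inter_sdiff_distrib_left, inter_sdiff_distrib_left, inter_iUnion₂, inter_iUnion₂, hone,
    iUnion₂_congr fun c hc => hΨ.Ioo_inter_Kk_psiJ hj0 hc.1]
end
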